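/- Let m, d, n ∈ ℕ, let w_e > 0 for e = 1,…,m, and for each e let ‖·‖_e be the norm on ℝᵈ induced by a symmetric positive-definite matrix. Let σ̂_e : ℝᵈ → ℝᵈ be continuous functions and B_e : ℝⁿ → ℝᵈ linear maps. Assume: (i) material stability: there exist a > 0, b ≥ 0 such that σ̂_e(ε)·ε ≥ a‖ε‖_e² − b for all ε ∈ ℝᵈ and all e; (ii) structural stability: there is c > 0 such that ‖u‖² ≤ c · Σ_{e=1}^m w_e ‖B_e u‖_e² for all u ∈ ℝⁿ. Then for every f ∈ ℝⁿ there exists u* ∈ ℝⁿ satisfying Σ_{e=1}^m w_e σ̂_e(B_e u*)·(B_e v) = f·v for all v ∈ ℝⁿ, and this solution satisfies ‖u*‖² ≤ (a/c − ε)⁻¹ ( ‖f‖²/(4ε) + b·V ) for every 0 < ε < a/c, where V = Σ_{e=1}^m w_e. -/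

import Mathlib

open Matrix

/-!
By structural stability the internal force `g u = w Bᵀ σ̂(B u)` inherits the growth bound
`⟪g u, u⟫ ≥ (a / c) ‖u‖² - b V` from material stability, and a continuous map of a Euclidean space
with such a bound is onto. Testing the equation with the solution itself and applying Young's
inequality to `f · u` gives the estimate.

Surjectivity rests on the nonexistence of a `C¹` retraction onto a sphere, proved by the
Milnor–Rogers volume argument: if `f` is the identity on the boundary of `U` and `φ = f - id`,
then `id + t φ` maps `U` bijectively onto itself for small `t`, so the polynomial
`t ↦ ∫_U det (1 + t Dφ)` equals the volume of `U` for small `t`, hence also for `t = 1`. A map of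
constant norm would have `det Df = 0` everywhere.
-/

section

open Bornology Filter MeasureTheory Metric Set
open scoped NNReal RealInnerProductSpace Topology

section Determinant

theorem exists_polynomial_eval_eq_det_one_add_smul {R M : Type*} [CommRing R] [Nontrivial R]
    [AddCommGroup M] [Module R M] [Module.Free R M] [Module.Finite R M] (f : M →ₗ[R] M) :
    ∃ p : Polynomial R, p.natDegree ≤ Module.finrank R M ∧
      ∀ t, p.eval t = LinearMap.det (1 + t • f) := by
  let b := Module.finBasis R M
  let A := LinearMap.toMatrix b b f
  refine ⟨det ((Polynomial.X : Polynomial R) • A.map Polynomial.C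
    + (1 : Matrix _ _ R).map Polynomial.C), ?_, fun t ↦ ?_⟩
  · simpa only [Fintype.card_fin] using Polynomial.natDegree_det_X_add_C_le A 1
  · rw [← LinearMap.det_toMatrix b, ← Polynomial.coe_evalRingHom, RingHom.map_det]
    congr 1
    ext i j
    by_cases hij : i = j <;>
      simp [A, LinearMap.toMatrix_one, hij] <;> ring

variable {E : Type*} [NormedAddCommGroup E] [NormedSpace ℝ E] [FiniteDimensional ℝ E]

theorem det_one_add_ne_zero_of_norm_lt_one {A : E →L[ℝ] E} (hA : ‖A‖ < 1) : (1 + A).det ≠ 0 := by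
  have := FiniteDimensional.complete ℝ E
  have hunit : IsUnit (1 + A) := by
    simpa only [sub_neg_eq_add] using isUnit_one_sub_of_norm_lt_one (x := -A) (by rwa [norm_neg])
  exact (LinearMap.isUnit_det _
    (hunit.map (ContinuousLinearMap.toLinearMapRingHom (R₁ := ℝ) (M₁ := E)))).ne_zero

theorem det_one_add_pos_of_norm_lt_one {A : E →L[ℝ] E} (hA : ‖A‖ < 1) : 0 < (1 + A).det := by
  have hcont : Continuous fun s : ℝ ↦ (1 + s • A).det :=
    ContinuousLinearMap.continuous_det.comp (by fun_prop)
  by_contra! hneg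
  obtain ⟨s, hs, hdet⟩ := intermediate_value_Icc' zero_le_one hcont.continuousOn
    (show (0 : ℝ) ∈ _ by simpa [ContinuousLinearMap.det] using hneg)
  refine det_one_add_ne_zero_of_norm_lt_one ?_ hdet
  calc ‖s • A‖ = s * ‖A‖ := by rw [norm_smul, Real.norm_of_nonneg hs.1]
    _ ≤ ‖A‖ := mul_le_of_le_one_left (norm_nonneg A) hs.2
    _ < 1 := hA

end Determinant

theorem exists_polynomial_eval_eq_integral {α : Type*} [MeasurableSpace α] {μ : Measure α}
    {f : ℝ → α → ℝ} {n : ℕ} (hf : ∀ t, Integrable (f t) μ)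
    (hpoly : ∀ x, ∃ p : Polynomial ℝ, p.natDegree ≤ n ∧ ∀ t, p.eval t = f t x) :
    ∃ P : Polynomial ℝ, ∀ t, P.eval t = ∫ x, f t x ∂μ := by
  let s := Finset.range (n + 1)
  let node : ℕ → ℝ := fun i ↦ i
  have hnode : Set.InjOn node s := Nat.cast_injective.injOn
  -- The coefficients of the interpolation formula do not depend on `x`, so it can be integrated.
  have hinterp : ∀ t x, f t x = ∑ i ∈ s, f i x * (Lagrange.basis s node i).eval t := by
    intro t x
    obtain ⟨p, hdeg, hp⟩ := hpoly x
    have hlt : p.degree < s.card := by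
      rw [Finset.card_range]
      exact Polynomial.degree_le_natDegree.trans_lt (mod_cast Nat.lt_succ_of_le hdeg)
    rw [← hp, Lagrange.eq_interpolate hnode hlt, Lagrange.interpolate_apply,
      Polynomial.eval_finsetSum]
    simp only [Polynomial.eval_mul, Polynomial.eval_C, hp, node]
  refine ⟨∑ i ∈ s, Polynomial.C (∫ x, f i x ∂μ) * Lagrange.basis s node i, fun t ↦ ?_⟩
  simp only [hinterp t, Polynomial.eval_finsetSum, Polynomial.eval_mul, Polynomial.eval_C]
  rw [integral_finsetSum s fun i _ ↦ (hf i).mul_const _]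
  simp only [integral_mul_const]

section Perturbation

variable {E : Type*} [NormedAddCommGroup E] [NormedSpace ℝ E]

theorem bijective_id_add_of_lipschitzWith [CompleteSpace E] {h : E → E} {K : ℝ≥0}
    (hh : LipschitzWith K h) (hK : K < 1) : Function.Bijective fun x ↦ x + h x := by
  have happrox : ApproximatesLinearOn (fun x ↦ x + h x)
      (ContinuousLinearEquiv.refl ℝ E : E →L[ℝ] E) univ K := by
    refine LipschitzOnWith.approximatesLinearOn (lipschitzOnWith_univ.2 ?_)
    convert hh using 1
    ext x
    simp
  have hconst : Subsingleton E ∨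
      K < ‖((ContinuousLinearEquiv.refl ℝ E).symm : E →L[ℝ] E)‖₊⁻¹ := by
    rcases subsingleton_or_nontrivial E with hE | hE
    · exact .inl hE
    · right
      simpa using hK
  exact ⟨injOn_univ.1 (happrox.injOn hconst), happrox.surjective hconst⟩

theorem image_eq_self_of_bijective_of_eqOn_compl {α : Type*} {g : α → α} {U : Set α}
    (hg : Function.Bijective g) (hid : EqOn g id Uᶜ) : g '' U = U := by
  rw [← compl_inj_iff, ← image_compl_eq hg, hid.image_eq, image_id]

theorem inter_frontier_nonempty_of_isPreconnected {X : Type*} [TopologicalSpace X] {s U : Set X}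
    (hs : IsPreconnected s) (hin : (s ∩ U).Nonempty) (hout : (s ∩ Uᶜ).Nonempty) :
    (s ∩ frontier U).Nonempty := by
  by_contra! hdisj
  have hsub : s ⊆ interior U ∪ interior Uᶜ := by
    rw [← compl_frontier_eq_union_interior]
    exact (disjoint_iff_inter_eq_empty.2 hdisj).subset_compl_right
  obtain ⟨x, hxs, hxU⟩ := hin
  obtain ⟨y, hys, hyU⟩ := hout
  have hx : x ∈ interior U := (hsub hxs).resolve_right fun h ↦ interior_subset h hxU
  have hy : y ∈ interior Uᶜ := (hsub hys).resolve_left fun h ↦ hyU (interior_subset h)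
  obtain ⟨z, -, hzU, hzUc⟩ := hs _ _ isOpen_interior isOpen_interior hsub ⟨x, hxs, hx⟩ ⟨y, hys, hy⟩
  exact interior_subset hzUc (interior_subset hzU)

theorem lipschitzWith_indicator_of_eqOn_frontier {F : Type*} [SeminormedAddCommGroup F] {φ : E → F}
    {U : Set E} {K : ℝ≥0} (hφ : LipschitzOnWith K φ (closure U)) (hφ0 : EqOn φ 0 (frontier U)) :
    LipschitzWith K (U.indicator φ) := by
  have hout : ∀ x ∈ U, ∀ y ∉ U, ‖φ x‖ ≤ K * dist x y := by
    intro x hx y hy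
    obtain ⟨z, hz, hzU⟩ := inter_frontier_nonempty_of_isPreconnected
      (convex_segment x y).isPreconnected ⟨x, left_mem_segment ℝ x y, hx⟩
      ⟨y, right_mem_segment ℝ x y, hy⟩
    calc ‖φ x‖ = dist (φ x) (φ z) := by rw [hφ0 hzU, Pi.zero_apply, dist_zero_right]
      _ ≤ K * dist x z := hφ.dist_le_mul x (subset_closure hx) z (frontier_subset_closure hzU)
      _ ≤ K * dist x y := by
        gcongr
        linarith [dist_add_dist_of_mem_segment hz, dist_nonneg (x := z) (y := y)]
  refine LipschitzWith.of_dist_le_mul fun x y ↦ ?_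
  by_cases hx : x ∈ U <;> by_cases hy : y ∈ U
  · simpa [hx, hy] using hφ.dist_le_mul x (subset_closure hx) y (subset_closure hy)
  · simpa [hx, hy] using hout x hx y hy
  · simpa [hx, hy, dist_comm] using hout y hy x hx
  · simp only [indicator_of_notMem, hx, hy, not_false_eq_true, dist_self]
    positivity

end Perturbation

section ChangeOfVariables

variable {E : Type*} [NormedAddCommGroup E] [NormedSpace ℝ E] [FiniteDimensional ℝ E]
  [MeasurableSpace E] [BorelSpace E] {μ : Measure E} [μ.IsAddHaarMeasure] {U : Set E}

theorem setIntegral_det_one_add_fderiv_of_lipschitzWith {h : E → E} {K : ℝ≥0} (hK : K < 1)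
    (hh : LipschitzWith K h) (hU : IsOpen U) (hdiff : DifferentiableOn ℝ h U)
    (hsupp : ∀ x ∉ U, h x = 0) :
    ∫ x in U, (1 + fderiv ℝ h x).det ∂μ = μ.real U := by
  have := FiniteDimensional.complete ℝ E
  have hbij := bijective_id_add_of_lipschitzWith hh hK
  have himage : (fun x ↦ x + h x) '' U = U :=
    image_eq_self_of_bijective_of_eqOn_compl hbij fun x hx ↦ by simp [hsupp x hx]
  have hderiv : ∀ x ∈ U, HasFDerivWithinAt (fun x ↦ x + h x) (1 + fderiv ℝ h x) U x :=
    fun x hx ↦ ((hasFDerivAt_id x).add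
      (hdiff.differentiableAt (hU.mem_nhds hx)).hasFDerivAt).hasFDerivWithinAt
  have hpos : ∀ x, 0 < (1 + fderiv ℝ h x).det := fun x ↦
    det_one_add_pos_of_norm_lt_one ((norm_fderiv_le_of_lipschitz ℝ hh).trans_lt hK)
  calc ∫ x in U, (1 + fderiv ℝ h x).det ∂μ
      = ∫ x in U, |(1 + fderiv ℝ h x).det| • (1 : ℝ) ∂μ := by
        simp only [abs_of_pos (hpos _), smul_eq_mul, mul_one]
    _ = ∫ _ in (fun x ↦ x + h x) '' U, (1 : ℝ) ∂μ :=
        (integral_image_eq_integral_abs_det_fderiv_smul μ hU.measurableSet hderiv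
          hbij.injective.injOn fun _ ↦ 1).symm
    _ = μ.real U := by rw [himage, setIntegral_const, smul_eq_mul, mul_one]

theorem setIntegral_det_one_add_smul_fderiv_of_mul_lt_one {φ : E → E} {K : ℝ≥0}
    (hφ : Differentiable ℝ φ) (hU : IsOpen U) (hLip : LipschitzOnWith K φ (closure U))
    (hφ0 : EqOn φ 0 (frontier U)) {t : ℝ≥0} (ht : t * K < 1) :
    ∫ x in U, (1 + (t : ℝ) • fderiv ℝ φ x).det ∂μ = μ.real U := by
  have hlip : LipschitzWith (t * K) (t • U.indicator φ) := by
    simpa using! (lipschitzWith_smul (t : ℝ)).comp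
      (lipschitzWith_indicator_of_eqOn_frontier hLip hφ0)
  have hderiv : ∀ x ∈ U, HasFDerivAt (t • U.indicator φ) ((t : ℝ) • fderiv ℝ φ x) x := fun x hx ↦
    ((hφ x).hasFDerivAt.congr_of_eventuallyEq
      (eqOn_indicator.eventuallyEq_of_mem (hU.mem_nhds hx))).const_smul (t : ℝ)
  rw [← setIntegral_det_one_add_fderiv_of_lipschitzWith (μ := μ) ht hlip hU
    (fun x hx ↦ (hderiv x hx).differentiableAt.differentiableWithinAt)
    (fun x hx ↦ by simp [hx])]
  refine setIntegral_congr_fun hU.measurableSet fun x hx ↦ ?_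
  simp only [(hderiv x hx).fderiv]

theorem integrableOn_det_one_add_smul_fderiv {φ : E → E} (hφ : ContDiff ℝ 1 φ)
    (hbdd : IsBounded U) (t : ℝ) : IntegrableOn (fun x ↦ (1 + t • fderiv ℝ φ x).det) U μ := by
  have := FiniteDimensional.proper ℝ E
  have hcont : Continuous fun x ↦ (1 + t • fderiv ℝ φ x).det :=
    have := hφ.continuous_fderiv one_ne_zero
    ContinuousLinearMap.continuous_det.comp (by fun_prop)
  exact (hcont.continuousOn.integrableOn_compact hbdd.isCompact_closure).mono_set subset_closure

theorem setIntegral_det_one_add_smul_fderiv {φ : E → E} (hφ : ContDiff ℝ 1 φ)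
    (hU : IsOpen U) (hbdd : IsBounded U) (hφ0 : EqOn φ 0 (frontier U)) (t : ℝ) :
    ∫ x in U, (1 + t • fderiv ℝ φ x).det ∂μ = μ.real U := by
  have := FiniteDimensional.proper ℝ E
  obtain ⟨K, hLip⟩ := hφ.locallyLipschitz.locallyLipschitzOn.exists_lipschitzOnWith_of_compact
    hbdd.isCompact_closure
  obtain ⟨P, hP⟩ := exists_polynomial_eval_eq_integral
    (integrableOn_det_one_add_smul_fderiv (μ := μ) hφ hbdd)
    fun x ↦ exists_polynomial_eval_eq_det_one_add_smul (fderiv ℝ φ x : E →ₗ[ℝ] E)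
  have hsmall : ∀ s ∈ Ioo (0 : ℝ) (1 / (K + 1)), P.eval s = (Polynomial.C (μ.real U)).eval s := by
    intro s hs
    lift s to ℝ≥0 using hs.1.le
    have hsK : s * K < 1 := by
      have : s * (K + 1) < 1 := mod_cast (lt_div_iff₀ (by positivity)).1 hs.2
      exact (mul_le_mul_right le_self_add s).trans_lt this
    rw [hP, Polynomial.eval_C]
    exact setIntegral_det_one_add_smul_fderiv_of_mul_lt_one (hφ.differentiable one_ne_zero) hU
      hLip hφ0 hsK
  have hPconst : P = Polynomial.C (μ.real U) :=
    P.eq_of_infinite_eval_eq _ ((Ioo_infinite (by positivity)).mono hsmall)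
  exact (hP t).symm.trans (by rw [hPconst, Polynomial.eval_C])

theorem setIntegral_det_fderiv_of_eqOn_frontier {f : E → E} (hf : ContDiff ℝ 1 f)
    (hU : IsOpen U) (hbdd : IsBounded U) (hid : EqOn f id (frontier U)) :
    ∫ x in U, (fderiv ℝ f x).det ∂μ = μ.real U := by
  have hfderiv : ∀ x, fderiv ℝ f x = 1 + (1 : ℝ) • fderiv ℝ (fun y ↦ f y - y) x := by
    intro x
    have hsub : fderiv ℝ (fun y ↦ f y - y) x = fderiv ℝ f x - 1 :=
      ((hf.differentiable one_ne_zero x).hasFDerivAt.sub (hasFDerivAt_id x)).fderiv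
    rw [hsub, one_smul, add_sub_cancel]
  simp only [hfderiv]
  exact setIntegral_det_one_add_smul_fderiv (hf.sub contDiff_id) hU hbdd
    (fun x hx ↦ sub_eq_zero.2 (hid hx)) 1

end ChangeOfVariables

section Zeros

variable {E : Type*} [NormedAddCommGroup E] [InnerProductSpace ℝ E]

theorem norm_sq_le_of_le_inner {f x : E} {α β ε : ℝ} (hε : 0 < ε) (hεα : ε < α)
    (hbound : α * ‖x‖ ^ 2 - β ≤ ⟪f, x⟫) :
    ‖x‖ ^ 2 ≤ (α - ε)⁻¹ * (‖f‖ ^ 2 / (4 * ε) + β) := by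
  have hyoung : ⟪f, x⟫ ≤ ε * ‖x‖ ^ 2 + ‖f‖ ^ 2 / (4 * ε) :=
    calc ⟪f, x⟫ ≤ ‖f‖ * ‖x‖ := real_inner_le_norm f x
      _ = 2 * ‖x‖ * ‖f‖ / 2 := by ring
      _ ≤ (2 * ε * ‖x‖ ^ 2 + (2 * ε)⁻¹ * ‖f‖ ^ 2) / 2 := by
        gcongr
        exact two_mul_le_add_mul_sq (by positivity)
      _ = ε * ‖x‖ ^ 2 + ‖f‖ ^ 2 / (4 * ε) := by field_simp; ring
  rw [le_inv_mul_iff₀ (sub_pos.2 hεα)]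
  linarith

variable [FiniteDimensional ℝ E]

theorem det_fderiv_eq_zero_of_norm_eq {f : E → E} {x : E} {S : ℝ}
    (hf : DifferentiableAt ℝ f x) (hS : S ≠ 0) (hnorm : ∀ᶠ y in 𝓝 x, ‖f y‖ = S) :
    (fderiv ℝ f x).det = 0 := by
  by_contra hdet
  have horth : ∀ v, ⟪f x, fderiv ℝ f x v⟫ = 0 := by
    intro v
    have hconst : HasFDerivAt (fun y ↦ ‖f y‖ ^ 2) (0 : E →L[ℝ] ℝ) x :=
      (hasFDerivAt_const (S ^ 2) x).congr_of_eventuallyEq (hnorm.mono fun y hy ↦ by simp only [hy])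
    simpa using congrArg (fun L : E →L[ℝ] ℝ ↦ L v) (hf.hasFDerivAt.norm_sq.unique hconst)
  obtain ⟨v, hv⟩ : ∃ v, fderiv ℝ f x v = f x :=
    ((Module.End.isUnit_iff _).1
      ((LinearMap.isUnit_iff_isUnit_det _).2 (isUnit_iff_ne_zero.2 hdet))).surjective (f x)
  have hzero : f x = 0 := inner_self_eq_zero.1 (hv ▸ horth v)
  exact hS (by rw [← hnorm.self_of_nhds, hzero, norm_zero])

theorem not_contDiff_of_norm_eq_of_eqOn_sphere {r : E → E} {S : ℝ} (hS : 0 < S)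
    (hnorm : ∀ x, ‖r x‖ = S) (hid : EqOn r id (sphere 0 S)) : ¬ ContDiff ℝ 1 r := by
  intro hr
  borelize E
  have hvol : ∫ x in ball 0 S, (fderiv ℝ r x).det = volume.real (ball (0 : E) S) :=
    setIntegral_det_fderiv_of_eqOn_frontier hr isOpen_ball isBounded_ball
      (hid.mono frontier_ball_subset_sphere)
  have hdet : ∀ x, (fderiv ℝ r x).det = 0 := fun x ↦
    det_fderiv_eq_zero_of_norm_eq (hr.differentiable one_ne_zero x) hS.ne' (.of_forall hnorm)
  simp only [hdet, integral_zero] at hvol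
  exact (ENNReal.toReal_pos (measure_ball_pos volume 0 hS).ne' measure_ball_lt_top.ne).ne hvol

theorem exists_eq_zero_of_contDiff_of_eqOn_sphere {g : E → E} (hg : ContDiff ℝ 1 g) {S : ℝ}
    (hS : 0 < S) (hid : EqOn g id (sphere 0 S)) : ∃ x, g x = 0 := by
  by_contra! hne
  refine not_contDiff_of_norm_eq_of_eqOn_sphere (r := fun x ↦ (S / ‖g x‖) • g x) hS
    (fun x ↦ ?_) (fun x hx ↦ ?_) ?_
  · rw [norm_smul, norm_div, norm_norm, Real.norm_of_nonneg hS.le,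
      div_mul_cancel₀ _ (norm_ne_zero_iff.2 (hne x))]
  · simp only [hid hx, id_eq, mem_sphere_zero_iff_norm.1 hx, div_self hS.ne', one_smul]
  · exact (contDiff_const.div (hg.norm ℝ hne) fun x ↦ norm_ne_zero_iff.2 (hne x)).smul hg

theorem exists_eq_zero_of_contDiff_of_inner_pos {g : E → E} (hg : ContDiff ℝ 1 g)
    (hpos : ∀ᶠ x in cobounded E, 0 < ⟪g x, x⟫) : ∃ x, g x = 0 := by
  obtain ⟨R, hR, hRpos⟩ : ∃ R > 0, ∀ x, R < ‖x‖ → 0 < ⟪g x, x⟫ := by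
    obtain ⟨R, -, hRpos⟩ := hasBasis_cobounded_norm.eventually_iff.1 hpos
    exact ⟨max R 1, by positivity, fun x hx ↦ hRpos ((le_max_left R 1).trans hx.le)⟩
  let β : ContDiffBump (0 : E) := ⟨R, 2 * R, hR, by linarith⟩
  obtain ⟨x, hx⟩ := exists_eq_zero_of_contDiff_of_eqOn_sphere
    (g := fun x ↦ β x • g x + (1 - β x) • x) (S := 2 * R)
    (by have := β.contDiff (n := 1); fun_prop) (by positivity) fun x hx ↦ by
      have hβ : β x = 0 := β.zero_of_le_dist hx.ge
      simp [hβ]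
  refine ⟨x, ?_⟩
  rcases le_or_gt ‖x‖ R with hxR | hxR
  · have hβ : β x = 1 := β.one_of_mem_closedBall (mem_closedBall_zero_iff.2 hxR)
    simpa [hβ] using hx
  · have hinner : β x * ⟪g x, x⟫ + (1 - β x) * ‖x‖ ^ 2 = 0 := by
      simpa [inner_add_left, real_inner_smul_left] using congrArg (⟪·, x⟫) hx
    have hsq : 0 < ‖x‖ ^ 2 := pow_pos (hR.trans hxR) 2
    have hcomb : 0 < β x * ⟪g x, x⟫ + (1 - β x) * ‖x‖ ^ 2 :=
      convex_Ioi (0 : ℝ) (hRpos x hxR) hsq β.nonneg (sub_nonneg.2 β.le_one) (add_sub_cancel _ _)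
    exact absurd hinner hcomb.ne'

theorem exists_eq_zero_of_continuous_of_norm_le_inner {g : E → E} (hg : Continuous g)
    (hpos : ∀ᶠ x in cobounded E, ‖x‖ ≤ ⟪g x, x⟫) : ∃ x, g x = 0 := by
  by_contra! hne
  obtain ⟨G, hG, hGg, -⟩ := hg.exists_contDiff_approx 1 (ε := fun x ↦ min ‖g x‖ 1)
    (by fun_prop) fun x ↦ lt_min (norm_pos_iff.2 (hne x)) one_pos
  obtain ⟨x, hx⟩ : ∃ x, G x = 0 := by
    refine exists_eq_zero_of_contDiff_of_inner_pos hG ?_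
    filter_upwards [hpos, eventually_ne_cobounded 0] with x hgx hx
    have hclose : ‖G x - g x‖ < 1 := by
      simpa only [dist_eq_norm] using (hGg x).trans_le (min_le_right _ _)
    have hle : -(‖G x - g x‖ * ‖x‖) ≤ ⟪G x, x⟫ - ⟪g x, x⟫ := by
      simpa only [inner_sub_left] using neg_le_of_abs_le (abs_real_inner_le_norm (G x - g x) x)
    have hlt := mul_lt_of_lt_one_left (norm_pos_iff.2 hx) hclose
    linarith
  have hself : dist (G x) (g x) < ‖g x‖ := (hGg x).trans_le (min_le_left _ _)
  rw [hx, dist_zero_left] at hself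
  exact hself.false

theorem surjective_of_continuous_of_coercive {g : E → E} (hg : Continuous g)
    (hcoer : Tendsto (fun x ↦ ⟪g x, x⟫ / ‖x‖) (cobounded E) atTop) : Function.Surjective g := by
  intro f
  suffices ∃ x, g x - f = 0 from this.imp fun x ↦ sub_eq_zero.1
  refine exists_eq_zero_of_continuous_of_norm_le_inner (hg.sub continuous_const) ?_
  filter_upwards [hcoer.eventually_ge_atTop (‖f‖ + 1), eventually_ne_cobounded 0] with x hgx hx
  rw [le_div_iff₀ (norm_pos_iff.2 hx)] at hgx
  rw [inner_sub_left]
  linarith [real_inner_le_norm f x]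

theorem surjective_of_continuous_of_le_inner {g : E → E} (hg : Continuous g) {α β : ℝ}
    (hα : 0 < α) (hbound : ∀ x, α * ‖x‖ ^ 2 - β ≤ ⟪g x, x⟫) : Function.Surjective g := by
  refine surjective_of_continuous_of_coercive hg ?_
  have hlim : Tendsto (fun x : E ↦ α * ‖x‖ - |β|) (cobounded E) atTop :=
    tendsto_atTop_add_const_right _ _ (tendsto_norm_cobounded_atTop.const_mul_atTop hα)
  refine tendsto_atTop_mono' _ ?_ hlim
  filter_upwards [tendsto_norm_cobounded_atTop.eventually_ge_atTop (1 : ℝ)] with x hx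
  have hβ : β ≤ |β| * ‖x‖ := (le_abs_self β).trans (le_mul_of_one_le_right (abs_nonneg β) hx)
  rw [le_div_iff₀ (by positivity)]
  linarith [hbound x]

end Zeros

section EuclideanSpace

variable {n : Type*} [Fintype n]

theorem inner_toLp_eq_dotProduct (x y : n → ℝ) :
    ⟪WithLp.toLp 2 x, WithLp.toLp 2 y⟫ = x ⬝ᵥ y := by
  rw [EuclideanSpace.inner_toLp_toLp, star_trivial, dotProduct_comm]

theorem norm_toLp_sq_eq_dotProduct (x : n → ℝ) :
    ‖WithLp.toLp 2 x‖ ^ 2 = x ⬝ᵥ x := by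
  rw [← real_inner_self_eq_norm_sq, inner_toLp_eq_dotProduct]

theorem surjective_of_continuous_of_le_dotProduct {T : (n → ℝ) → n → ℝ} (hT : Continuous T)
    {α β : ℝ} (hα : 0 < α) (hbound : ∀ u, α * (u ⬝ᵥ u) - β ≤ T u ⬝ᵥ u) : Function.Surjective T := by
  let g : EuclideanSpace ℝ n → EuclideanSpace ℝ n := fun x ↦ WithLp.toLp 2 (T x.ofLp)
  have hg : Function.Surjective g := by
    refine surjective_of_continuous_of_le_inner (β := β) (by fun_prop) hα fun x ↦ ?_
    simpa only [← norm_toLp_sq_eq_dotProduct, ← inner_toLp_eq_dotProduct] using! hbound x.ofLp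
  intro f
  obtain ⟨x, hx⟩ := hg (WithLp.toLp 2 f)
  exact ⟨x.ofLp, congrArg WithLp.ofLp hx⟩

end EuclideanSpace

section InternalForce

variable {ι n : Type*} {κ : ι → Type*} [Fintype ι] [Fintype n] [∀ e, Fintype (κ e)] [DecidableEq n]
  (w : ι → ℝ) (σ : ∀ e, (κ e → ℝ) → κ e → ℝ) (B : ∀ e, (n → ℝ) →ₗ[ℝ] (κ e → ℝ))

/-- The nodal force `w Bᵀ σ̂(B u)` with which the stresses resist the displacement `u`. The row
vector product `s ᵥ* M` stands for `Mᵀ s`. -/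
noncomputable def internalForce (u : n → ℝ) : n → ℝ :=
  ∑ e, w e • (σ e (B e u) ᵥ* LinearMap.toMatrix' (B e))

theorem internalForce_dotProduct (u v : n → ℝ) :
    internalForce w σ B u ⬝ᵥ v = ∑ e, w e * (σ e (B e u) ⬝ᵥ B e v) := by
  simp only [internalForce, sum_dotProduct, smul_dotProduct, smul_eq_mul, ← dotProduct_mulVec,
    LinearMap.toMatrix'_mulVec]

variable {σ} in
theorem continuous_internalForce (hσ : ∀ e, Continuous (σ e)) :
    Continuous (internalForce w σ B) :=
  continuous_finsetSum _ fun e _ ↦ (((hσ e).comp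
    (B e).continuous_of_finiteDimensional).matrix_vecMul continuous_const).const_smul (w e)

variable {w σ B} in
theorem le_internalForce_dotProduct_self {a b c : ℝ} {Q : ∀ e, (κ e → ℝ) → ℝ}
    (hw : ∀ e, 0 ≤ w e) (ha : 0 ≤ a) (hc : 0 < c)
    (hmat : ∀ e ε, a * Q e ε - b ≤ σ e ε ⬝ᵥ ε)
    (hstruct : ∀ u, u ⬝ᵥ u ≤ c * ∑ e, w e * Q e (B e u)) (u : n → ℝ) :
    a / c * (u ⬝ᵥ u) - b * ∑ e, w e ≤ internalForce w σ B u ⬝ᵥ u :=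
  calc a / c * (u ⬝ᵥ u) - b * ∑ e, w e
      ≤ a / c * (c * ∑ e, w e * Q e (B e u)) - b * ∑ e, w e := by
        gcongr
        exact hstruct u
    _ = ∑ e, w e * (a * Q e (B e u) - b) := by
        rw [← mul_assoc, div_mul_cancel₀ _ hc.ne', Finset.mul_sum, Finset.mul_sum,
          ← Finset.sum_sub_distrib]
        exact Finset.sum_congr rfl fun e _ ↦ by ring
    _ ≤ ∑ e, w e * (σ e (B e u) ⬝ᵥ B e u) :=
        Finset.sum_le_sum fun e _ ↦ mul_le_mul_of_nonneg_left (hmat e _) (hw e)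
    _ = internalForce w σ B u ⬝ᵥ u := (internalForce_dotProduct w σ B u u).symm

end InternalForce

end

/-- `Q e` takes the place of the squared norm `‖·‖_e²`. -/
theorem existence_of_solutions_general {ι n : Type*} {κ : ι → Type*} [Fintype ι] [Fintype n]
    [∀ e, Fintype (κ e)]
    {w : ι → ℝ} (hw : ∀ e, 0 ≤ w e) {Q : ∀ e, (κ e → ℝ) → ℝ}
    {σ : ∀ e, (κ e → ℝ) → κ e → ℝ} (hσ : ∀ e, Continuous (σ e))
    (B : ∀ e, (n → ℝ) →ₗ[ℝ] (κ e → ℝ)) {a b c : ℝ} (ha : 0 < a)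
    (hmat : ∀ e ε, a * Q e ε - b ≤ σ e ε ⬝ᵥ ε) (hc : 0 < c)
    (hstruct : ∀ u, u ⬝ᵥ u ≤ c * ∑ e, w e * Q e (B e u)) (f : n → ℝ) :
    ∃ u : n → ℝ, (∀ v, ∑ e, w e * (σ e (B e u) ⬝ᵥ B e v) = f ⬝ᵥ v) ∧
      ∀ ε : ℝ, 0 < ε → ε < a / c →
        u ⬝ᵥ u ≤ (a / c - ε)⁻¹ * ((f ⬝ᵥ f) / (4 * ε) + b * ∑ e, w e) := by
  classical
  have hcoer := le_internalForce_dotProduct_self hw ha.le hc hmat hstruct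
  obtain ⟨u, rfl⟩ := surjective_of_continuous_of_le_dotProduct
    (continuous_internalForce w B hσ) (div_pos ha hc) hcoer f
  refine ⟨u, fun v ↦ (internalForce_dotProduct w σ B u v).symm, fun ε hε hεα ↦ ?_⟩
  have hbound := hcoer u
  simp only [← norm_toLp_sq_eq_dotProduct, ← inner_toLp_eq_dotProduct] at hbound ⊢
  exact norm_sq_le_of_le_inner hε hεα hbound

/-- **Existence of solutions** for the effective displacement problem
`w Bᵀ σ̂(B u) = f` (in weak form), under material stability and structural
stability, together with the a-priori bound
`‖u*‖² ≤ (a/c − ε)⁻¹ (‖f‖²/(4ε) + bV)` for all `0 < ε < a/c`, `V = Σ_e w_e`.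
The norm `‖·‖_e` on `ℝᵈ` is the one induced by the symmetric positive-definite
matrix `𝔹 e`, i.e. `‖x‖_e² = (𝔹 e) x ⬝ᵥ x`; norms on `ℝⁿ` are Euclidean,
`‖u‖² = u ⬝ᵥ u`. -/
theorem existence_of_solutions (m d n : ℕ)
    (w : Fin m → ℝ) (hw : ∀ e, 0 < w e)
    (𝔹 : Fin m → Matrix (Fin d) (Fin d) ℝ) (h𝔹 : ∀ e, (𝔹 e).PosDef)
    (σ : Fin m → (Fin d → ℝ) → (Fin d → ℝ)) (hσ : ∀ e, Continuous (σ e))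
    (B : Fin m → (Fin n → ℝ) →ₗ[ℝ] (Fin d → ℝ))
    (a b : ℝ) (ha : 0 < a) (hb : 0 ≤ b)
    (hmat : ∀ e (ε : Fin d → ℝ), a * ((𝔹 e).mulVec ε ⬝ᵥ ε) - b ≤ σ e ε ⬝ᵥ ε)
    (c : ℝ) (hc : 0 < c)
    (hstruct : ∀ u : Fin n → ℝ,
      u ⬝ᵥ u ≤ c * ∑ e, w e * ((𝔹 e).mulVec (B e u) ⬝ᵥ (B e u)))
    (f : Fin n → ℝ) :
    ∃ u : Fin n → ℝ,
      (∀ v : Fin n → ℝ, ∑ e, w e * (σ e (B e u) ⬝ᵥ (B e v)) = f ⬝ᵥ v) ∧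
      ∀ ε : ℝ, 0 < ε → ε < a / c →
        u ⬝ᵥ u ≤ (a / c - ε)⁻¹ * ((f ⬝ᵥ f) / (4 * ε) + b * ∑ e, w e) := by
  exact existence_of_solutions_general (fun e ↦ (hw e).le) hσ B ha hmat hc hstruct f
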